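/- Let d ≥ 1, t > 0, s > 0, and fix multi-indices α, γ ∈ ℕ^d. On a probability space, let (W^m, Z^m)_{m≥1} be an i.i.d. sequence of ℝ^d × ℝ^d-valued random vectors with common law ν_t ⊗ ν_s. Then, almost surely, as M → ∞, (1/M) Σ_{m=1}^M (H_α^{(t)}(W^m) + ⟨∇H_α^{(t)}(W^m), Z^m⟩)(H_γ^{(t)}(W^m) + ⟨∇H_γ^{(t)}(W^m), Z^m⟩) converges to 1 + |α|·s/t if α = γ, and to 0 if α ≠ γ. -/

import Mathlib

open MeasureTheory ProbabilityTheory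

/-- The centered Gaussian product measure `ν_t` on `Fin d → ℝ` with variance `t` per coordinate. -/
noncomputable def gaussPi (d : ℕ) (t : ℝ) : Measure (Fin d → ℝ) :=
  Measure.pi fun _ => gaussianReal 0 t.toNNReal

/-- Normalized generalized Hermite polynomial `H_n^{(t)}(y) = H_n(y/√t)/√(n!)`,
where `H_n` is the probabilists' Hermite polynomial. -/
noncomputable def Hgen (t : ℝ) (n : ℕ) (y : ℝ) : ℝ :=
  Polynomial.aeval (y / Real.sqrt t) (Polynomial.hermite n) / Real.sqrt (Nat.factorial n)

/-- Tensorized Hermite polynomial `H_α^{(t)}(y) = ∏_j H_{α_j}^{(t)}(y_j)`. -/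
noncomputable def HgenMulti (d : ℕ) (t : ℝ) (α : Fin d → ℕ) (y : Fin d → ℝ) : ℝ :=
  ∏ j, Hgen t (α j) (y j)

/-- Partial derivative of `f : ℝ^d → ℝ` in the `j`-th coordinate at `y`. -/
noncomputable def pd (d : ℕ) (f : (Fin d → ℝ) → ℝ) (j : Fin d) (y : Fin d → ℝ) : ℝ :=
  deriv (fun s => f (Function.update y j s)) (y j)

/-- Real Hermite polynomial. -/
noncomputable def hR (n : ℕ) : Polynomial ℝ := (Polynomial.hermite n).map (Int.castRingHom ℝ)

lemma hR_zero : hR 0 = 1 := by simp [hR]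

lemma hR_succ (n : ℕ) : hR (n + 1) = Polynomial.X * hR n - Polynomial.derivative (hR n) := by
  simp [hR, Polynomial.hermite_succ, Polynomial.derivative_map]

lemma hR_deriv (n : ℕ) : Polynomial.derivative (hR (n + 1)) = ((n : Polynomial ℝ) + 1) * hR n := by
  induction n with
  | zero => simp [hR_succ, hR_zero]
  | succ n ih =>
    rw [hR_succ (n + 1)]
    have h2 : Polynomial.derivative (Polynomial.derivative (hR (n + 1)))
        = ((n : Polynomial ℝ) + 1) * Polynomial.derivative (hR n) := by
      rw [ih]; simp
    rw [Polynomial.derivative_sub, Polynomial.derivative_mul, Polynomial.derivative_X, h2, ih]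
    rw [hR_succ n]
    push_cast
    ring

lemma poly_integrable (p : Polynomial ℝ) : Integrable (fun x => p.eval x) (gaussianReal 0 1) := by
  have hpow : ∀ n : ℕ, Integrable (fun x : ℝ => x ^ n) (gaussianReal 0 1) := by
    intro n
    have h := (memLp_id_gaussianReal (μ := 0) (v := 1) (n : NNReal))
    have h2 : MemLp (id : ℝ → ℝ) (n : ENNReal) (gaussianReal 0 1) := by simpa using h
    have h3 := h2.integrable_norm_pow'
    refine (integrable_norm_iff (by fun_prop)).1 ?_
    simpa using h3
  simp_rw [Polynomial.eval_eq_sum_range]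
  exact integrable_finsetSum _ fun i _ => (hpow i).const_mul _

lemma poly_integrable_pdf (p : Polynomial ℝ) :
    Integrable (fun x => p.eval x * gaussianPDFReal 0 1 x) := by
  have h := poly_integrable p
  rw [gaussianReal_of_var_ne_zero _ one_ne_zero,
    integrable_withDensity_iff (measurable_gaussianPDF _ _)
      (ae_of_all _ fun _ => gaussianPDF_lt_top)] at h
  simpa using h

lemma stein (p : Polynomial ℝ) :
    ∫ x, (Polynomial.X * p - Polynomial.derivative p).eval x ∂(gaussianReal 0 1) = 0 := by
  rw [integral_gaussianReal_eq_integral_smul one_ne_zero]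
  have hd : ∀ x, HasDerivAt (fun x => (-p).eval x * gaussianPDFReal 0 1 x)
      ((Polynomial.X * p - Polynomial.derivative p).eval x * gaussianPDFReal 0 1 x) x := by
    intro x
    have h1 := (-p).hasDerivAt x
    have h2 : HasDerivAt (gaussianPDFReal 0 1) (-x * gaussianPDFReal 0 1 x) x := by
      rw [gaussianPDFReal_def]
      have h3 : HasDerivAt (fun x : ℝ => -(x - 0) ^ 2 / (2 * ((1 : NNReal) : ℝ))) (-x) x := by
        have := (((hasDerivAt_id x).sub_const 0).pow 2).neg.div_const (2 * ((1 : NNReal) : ℝ))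
        refine this.congr_deriv ?_
        simp
        ring
      refine (h3.exp.const_mul _).congr_deriv ?_
      ring
    refine (h1.mul h2).congr_deriv ?_
    simp
    ring
  have := integral_eq_zero_of_hasDerivAt_of_integrable hd (poly_integrable_pdf _)
    (poly_integrable_pdf _)
  simpa [mul_comm] using this

lemma hR_shift (n : ℕ) (q : Polynomial ℝ) :
    ∫ x, (hR (n + 1) * q).eval x ∂(gaussianReal 0 1)
      = ∫ x, (hR n * Polynomial.derivative q).eval x ∂(gaussianReal 0 1) := by
  rw [← sub_eq_zero, ← integral_sub (poly_integrable _) (poly_integrable _)]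
  refine Eq.trans (integral_congr_ae (ae_of_all _ fun x => ?_)) (stein (hR n * q))
  rw [hR_succ]
  simp
  ring

lemma hR_orth (n : ℕ) : ∀ m : ℕ, ∫ x, (hR n * hR m).eval x ∂(gaussianReal 0 1)
    = if n = m then (n.factorial : ℝ) else 0 := by
  induction n with
  | zero =>
    intro m
    cases m with
    | zero => simp [hR_zero]
    | succ m =>
      rw [mul_comm, hR_shift]
      simp [hR_zero]
  | succ n ih =>
    intro m
    rw [hR_shift]
    cases m with
    | zero => simp [hR_zero]
    | succ m =>
      rw [hR_deriv]
      have : ∀ x, (hR n * (((m : Polynomial ℝ) + 1) * hR m)).eval x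
          = ((m : ℝ) + 1) * (hR n * hR m).eval x := by
        intro x; simp; ring
      simp_rw [this]
      rw [integral_const_mul, ih]
      by_cases h : n = m
      · subst h; simp [Nat.factorial_succ]
      · simp [h]

lemma Hgen_eq (t : ℝ) (n : ℕ) (y : ℝ) :
    Hgen t n y = (hR n).eval (y / Real.sqrt t) / Real.sqrt (Nat.factorial n) := by
  rw [Hgen, hR, Polynomial.eval_map, Polynomial.aeval_def]
  rfl

lemma gauss_map (t : ℝ) (ht : 0 < t) :
    (gaussianReal 0 t.toNNReal).map (fun x => x / Real.sqrt t) = gaussianReal 0 1 := by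
  rw [gaussianReal_map_div_const]
  congr 1
  · simp
  · ext
    simp [ht.le, ht.ne']

lemma Hgen_mul_eq (t : ℝ) (n m : ℕ) :
    (fun y => Hgen t n y * Hgen t m y) = fun y =>
      (Real.sqrt (Nat.factorial n) * Real.sqrt (Nat.factorial m))⁻¹
        * (hR n * hR m).eval (y / Real.sqrt t) := by
  ext y
  rw [Hgen_eq, Hgen_eq, Polynomial.eval_mul]
  field_simp

lemma Hgen_integrable (t : ℝ) (ht : 0 < t) (n m : ℕ) :
    Integrable (fun y => Hgen t n y * Hgen t m y) (gaussianReal 0 t.toNNReal) := by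
  rw [Hgen_mul_eq]
  refine Integrable.const_mul ?_ _
  have h := poly_integrable (hR n * hR m)
  rw [← gauss_map t ht] at h
  exact h.comp_measurable (by fun_prop)

lemma Hgen_orth (t : ℝ) (ht : 0 < t) (n m : ℕ) :
    ∫ y, Hgen t n y * Hgen t m y ∂(gaussianReal 0 t.toNNReal) = if n = m then 1 else 0 := by
  rw [Hgen_mul_eq, integral_const_mul]
  have h := hR_orth n m
  rw [← gauss_map t ht, integral_map (by fun_prop)
    ((hR n * hR m).continuous.aestronglyMeasurable)] at h
  rw [h]
  split_ifs with h
  · subst h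
    rw [Real.mul_self_sqrt (by positivity)]
    exact inv_mul_cancel₀ (by positivity)
  · simp

lemma multi_mul (d : ℕ) (t : ℝ) (α γ : Fin d → ℕ) (y : Fin d → ℝ) :
    HgenMulti d t α y * HgenMulti d t γ y = ∏ j, (Hgen t (α j) (y j) * Hgen t (γ j) (y j)) := by
  simp [HgenMulti, Finset.prod_mul_distrib]

lemma multi_integrable (d : ℕ) (t : ℝ) (ht : 0 < t) (α γ : Fin d → ℕ) :
    Integrable (fun y => HgenMulti d t α y * HgenMulti d t γ y) (gaussPi d t) := by
  simp_rw [multi_mul]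
  exact Integrable.fintype_prod (f := fun j y => Hgen t (α j) y * Hgen t (γ j) y)
    fun j => Hgen_integrable t ht _ _

lemma multi_orth (d : ℕ) (t : ℝ) (ht : 0 < t) (α γ : Fin d → ℕ) :
    ∫ y, HgenMulti d t α y * HgenMulti d t γ y ∂(gaussPi d t) = if α = γ then 1 else 0 := by
  simp_rw [multi_mul]
  rw [gaussPi, integral_fintype_prod_eq_prod (fun j y => Hgen t (α j) y * Hgen t (γ j) y)]
  simp_rw [Hgen_orth t ht]
  rw [Finset.prod_boole]
  simp [funext_iff]

lemma Hgen_hasDerivAt (t : ℝ) (ht : 0 < t) (n : ℕ) (y : ℝ) :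
    HasDerivAt (Hgen t n) (Real.sqrt (n / t) * Hgen t (n - 1) y) y := by
  have h0 : HasDerivAt (fun y => (hR n).eval (y / Real.sqrt t) / Real.sqrt (Nat.factorial n))
      ((Polynomial.derivative (hR n)).eval (y / Real.sqrt t) * (1 / Real.sqrt t)
        / Real.sqrt (Nat.factorial n)) y :=
    (((hR n).hasDerivAt (y / Real.sqrt t)).comp y
      ((hasDerivAt_id y).div_const (Real.sqrt t))).div_const _
  have h1 : Hgen t n = fun y => (hR n).eval (y / Real.sqrt t) / Real.sqrt (Nat.factorial n) :=
    funext fun y => Hgen_eq t n y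
  rw [h1]
  convert h0 using 1
  cases n with
  | zero => simp [hR_zero]
  | succ n =>
    rw [Hgen_eq, hR_deriv, Nat.factorial_succ, Real.sqrt_div (by positivity)]
    have e : ((n : ℝ) + 1) = Real.sqrt ((n : ℝ) + 1) * Real.sqrt ((n : ℝ) + 1) :=
      (Real.mul_self_sqrt (by positivity)).symm
    have hp : 0 < Real.sqrt ((n : ℝ) + 1) := Real.sqrt_pos.2 (by positivity)
    have hf : 0 < Real.sqrt (n.factorial : ℝ) := Real.sqrt_pos.2 (by positivity)
    have ht' := Real.sqrt_pos.2 ht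
    simp only [Nat.add_sub_cancel, Polynomial.eval_mul, Polynomial.eval_add,
      Polynomial.eval_natCast, Polynomial.eval_one, Nat.cast_mul, Nat.cast_add, Nat.cast_one]
    rw [Real.sqrt_mul (by positivity)]
    field_simp
    rw [Real.sq_sqrt (by positivity)]

lemma pd_eq (d : ℕ) (t : ℝ) (ht : 0 < t) (α : Fin d → ℕ) (j : Fin d) (y : Fin d → ℝ) :
    pd d (HgenMulti d t α) j y
      = Real.sqrt (α j / t) * HgenMulti d t (Function.update α j (α j - 1)) y := by
  have key : ∀ s, HgenMulti d t α (Function.update y j s)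
      = Hgen t (α j) s * ∏ i ∈ Finset.univ.erase j, Hgen t (α i) (y i) := by
    intro s
    rw [HgenMulti, ← Finset.mul_prod_erase _ _ (Finset.mem_univ j)]
    congr 1
    · simp
    · refine Finset.prod_congr rfl fun i hi => ?_
      rw [Function.update_of_ne (Finset.ne_of_mem_erase hi)]
  have key2 : HgenMulti d t (Function.update α j (α j - 1)) y
      = Hgen t (α j - 1) (y j) * ∏ i ∈ Finset.univ.erase j, Hgen t (α i) (y i) := by
    rw [HgenMulti, ← Finset.mul_prod_erase _ _ (Finset.mem_univ j)]
    congr 1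
    · simp
    · refine Finset.prod_congr rfl fun i hi => ?_
      rw [Function.update_of_ne (Finset.ne_of_mem_erase hi)]
  rw [pd, key2]
  simp_rw [key]
  rw [((Hgen_hasDerivAt t ht (α j) (y j)).mul_const _).deriv]
  ring

lemma coord_eq (d : ℕ) (s : ℝ) (hs : 0 < s) (j : Fin d) (z : Fin d → ℝ) :
    z j = Real.sqrt s * HgenMulti d s (Pi.single j 1) z := by
  rw [HgenMulti, ← Finset.mul_prod_erase _ _ (Finset.mem_univ j), Finset.prod_eq_one]
  · have := Real.sqrt_pos.2 hs
    simp [Hgen]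
    field_simp
  · intro i hi
    simp [Hgen, Finset.ne_of_mem_erase hi]

/-- Shifted multi-index. -/
def shift {d : ℕ} (α : Fin d → ℕ) : Option (Fin d) → (Fin d → ℕ)
  | none => α
  | some j => Function.update α j (α j - 1)

/-- Multi-index of the increment variable. -/
def unitIdx {d : ℕ} : Option (Fin d) → (Fin d → ℕ)
  | none => 0
  | some j => Pi.single j 1

/-- Coefficients. -/
noncomputable def coef {d : ℕ} (t s : ℝ) (α : Fin d → ℕ) : Option (Fin d) → ℝ
  | none => 1
  | some j => Real.sqrt (α j / t) * Real.sqrt s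

lemma unitIdx_inj {d : ℕ} (o o' : Option (Fin d)) : unitIdx o = unitIdx o' ↔ o = o' := by
  refine ⟨fun h => ?_, fun h => h ▸ rfl⟩
  cases o with
  | none =>
    cases o' with
    | none => rfl
    | some k => simpa [unitIdx] using congrFun h k
  | some j =>
    cases o' with
    | none => simpa [unitIdx] using congrFun h j
    | some k =>
      have := congrFun h j
      by_cases e : j = k
      · rw [e]
      · simp [unitIdx, e] at this

lemma F_eq (d : ℕ) (t s : ℝ) (ht : 0 < t) (hs : 0 < s) (α : Fin d → ℕ) (w z : Fin d → ℝ) :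
    HgenMulti d t α w + ∑ j, pd d (HgenMulti d t α) j w * z j
      = ∑ o, coef t s α o * (HgenMulti d t (shift α o) w * HgenMulti d s (unitIdx o) z) := by
  rw [Fintype.sum_option]
  congr 1
  · simp [coef, shift, unitIdx, HgenMulti, Hgen]
  · refine Finset.sum_congr rfl fun j _ => ?_
    rw [pd_eq d t ht, coord_eq d s hs j z]
    simp only [coef, shift, unitIdx]
    ring

lemma FF_eq (d : ℕ) (t s : ℝ) (ht : 0 < t) (hs : 0 < s) (α γ : Fin d → ℕ) (w z : Fin d → ℝ) :
    (HgenMulti d t α w + ∑ j, pd d (HgenMulti d t α) j w * z j)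
      * (HgenMulti d t γ w + ∑ j, pd d (HgenMulti d t γ) j w * z j)
      = ∑ o, ∑ o', (coef t s α o * coef t s γ o') *
        ((HgenMulti d t (shift α o) w * HgenMulti d t (shift γ o') w)
          * (HgenMulti d s (unitIdx o) z * HgenMulti d s (unitIdx o') z)) := by
  rw [F_eq d t s ht hs, F_eq d t s ht hs, Finset.sum_mul_sum]
  refine Finset.sum_congr rfl fun o _ => Finset.sum_congr rfl fun o' _ => ?_
  ring

lemma coef_sum (d : ℕ) (t s : ℝ) (ht : 0 < t) (hs : 0 < s) (α γ : Fin d → ℕ) :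
    ∑ o, coef t s α o * coef t s γ o * (if shift α o = shift γ o then 1 else 0)
      = if α = γ then 1 + ((∑ j, α j : ℕ) : ℝ) * s / t else 0 := by
  rw [Fintype.sum_option]
  by_cases h' : α = γ
  · subst h'
    simp only [coef, if_true]
    push_cast
    rw [Finset.sum_mul, Finset.sum_div]
    congr 1
    · simp
    · refine Finset.sum_congr rfl fun j _ => ?_
      rw [mul_one, mul_mul_mul_comm, Real.mul_self_sqrt (by positivity),
        Real.mul_self_sqrt hs.le]
      ring
  · rw [if_neg h', if_neg (show ¬ shift α none = shift γ none from h'), mul_zero, zero_add]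
    refine Finset.sum_eq_zero fun j _ => ?_
    by_cases ha : α j = 0
    · simp [coef, ha]
    by_cases hg : γ j = 0
    · simp [coef, hg]
    rw [if_neg, mul_zero]
    intro e
    apply h'
    funext i
    have := congrFun e i
    by_cases hi : i = j
    · subst hi
      simp [shift] at this
      omega
    · simpa [shift, hi] using this

instance (d : ℕ) (t : ℝ) : IsProbabilityMeasure (gaussPi d t) := by
  unfold gaussPi; infer_instance

lemma Hgen_continuous (t : ℝ) (n : ℕ) : Continuous (Hgen t n) := by
  have h1 : Hgen t n = fun y => (hR n).eval (y / Real.sqrt t) / Real.sqrt (Nat.factorial n) :=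
    funext fun y => Hgen_eq t n y
  rw [h1]
  fun_prop

lemma multi_measurable (d : ℕ) (t : ℝ) (α : Fin d → ℕ) : Measurable (HgenMulti d t α) := by
  unfold HgenMulti
  exact Finset.measurable_prod _ fun j _ =>
    (Hgen_continuous t (α j)).measurable.comp (measurable_pi_apply j)

/-- Almost-sure convergence of the entries of the normalized gradient-enhanced Gram matrix
`M⁻¹ A_k^⊤ A_k` for an i.i.d. sequence `(Wᵐ, Zᵐ)` with common law `ν_t ⊗ ν_s`. -/
theorem gram_entry_lln {Ω : Type*} [MeasurableSpace Ω] (μ : Measure Ω) [IsProbabilityMeasure μ]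
    (d : ℕ) (hd : 1 ≤ d) (t s : ℝ) (ht : 0 < t) (hs : 0 < s) (α γ : Fin d → ℕ)
    (X : ℕ → Ω → (Fin d → ℝ) × (Fin d → ℝ))
    (hmeas : ∀ m, Measurable (X m))
    (hindep : iIndepFun X μ)
    (hdist : ∀ m, Measure.map (X m) μ = (gaussPi d t).prod (gaussPi d s)) :
    ∀ᵐ ω ∂μ, Filter.Tendsto
      (fun M : ℕ => (M : ℝ)⁻¹ * ∑ m ∈ Finset.range M,
        (HgenMulti d t α (X m ω).1 + ∑ j, pd d (HgenMulti d t α) j (X m ω).1 * (X m ω).2 j)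
          * (HgenMulti d t γ (X m ω).1 + ∑ j, pd d (HgenMulti d t γ) j (X m ω).1 * (X m ω).2 j))
      Filter.atTop
      (nhds (if α = γ then 1 + ((∑ j, α j : ℕ) : ℝ) * s / t else 0)) := by
  set G : (Fin d → ℝ) × (Fin d → ℝ) → ℝ := fun p =>
    (HgenMulti d t α p.1 + ∑ j, pd d (HgenMulti d t α) j p.1 * p.2 j)
      * (HgenMulti d t γ p.1 + ∑ j, pd d (HgenMulti d t γ) j p.1 * p.2 j) with hG
  have hG' : G = fun p => ∑ o, ∑ o', (coef t s α o * coef t s γ o') *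
        ((HgenMulti d t (shift α o) p.1 * HgenMulti d t (shift γ o') p.1)
          * (HgenMulti d s (unitIdx o) p.2 * HgenMulti d s (unitIdx o') p.2)) := by
    funext p
    exact FF_eq d t s ht hs α γ p.1 p.2
  have hterm : ∀ o o', Integrable (fun p : (Fin d → ℝ) × (Fin d → ℝ) =>
      (coef t s α o * coef t s γ o') *
        ((HgenMulti d t (shift α o) p.1 * HgenMulti d t (shift γ o') p.1)
          * (HgenMulti d s (unitIdx o) p.2 * HgenMulti d s (unitIdx o') p.2)))
      ((gaussPi d t).prod (gaussPi d s)) := fun o o' =>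
    ((multi_integrable d t ht _ _).mul_prod (multi_integrable d s hs _ _)).const_mul _
  have hGm : Measurable G := by
    rw [hG']
    have h1 : ∀ β, Measurable fun p : (Fin d → ℝ) × (Fin d → ℝ) => HgenMulti d t β p.1 :=
      fun β => (multi_measurable d t β).comp measurable_fst
    have h2 : ∀ β, Measurable fun p : (Fin d → ℝ) × (Fin d → ℝ) => HgenMulti d s β p.2 :=
      fun β => (multi_measurable d s β).comp measurable_snd
    exact Finset.measurable_sum _ fun o _ => Finset.measurable_sum _ fun o' _ =>
      (((h1 _).mul (h1 _)).mul ((h2 _).mul (h2 _))).const_mul _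
  have hGi : Integrable G ((gaussPi d t).prod (gaussPi d s)) := by
    rw [hG']
    exact integrable_finsetSum _ fun o _ => integrable_finsetSum _ fun o' _ => hterm o o'
  have hGint : ∫ p, G p ∂((gaussPi d t).prod (gaussPi d s))
      = if α = γ then 1 + ((∑ j, α j : ℕ) : ℝ) * s / t else 0 := by
    rw [hG', integral_finsetSum _ fun o _ => integrable_finsetSum _ fun o' _ => hterm o o',
      ← coef_sum d t s ht hs]
    refine Finset.sum_congr rfl fun o _ => ?_
    rw [integral_finsetSum _ fun o' _ => hterm o o', Finset.sum_eq_single o]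
    · rw [integral_const_mul, integral_prod_mul
        (fun w => HgenMulti d t (shift α o) w * HgenMulti d t (shift γ o) w)
        (fun z => HgenMulti d s (unitIdx o) z * HgenMulti d s (unitIdx o) z),
        multi_orth d t ht, multi_orth d s hs]
      simp
    · intro o' _ hne
      rw [integral_const_mul, integral_prod_mul
        (fun w => HgenMulti d t (shift α o) w * HgenMulti d t (shift γ o') w)
        (fun z => HgenMulti d s (unitIdx o) z * HgenMulti d s (unitIdx o') z),
        multi_orth d s hs, if_neg]
      · simp
      · rw [unitIdx_inj]; exact fun h => hne h.symm
    · simp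
  have hlaw := strong_law_ae_real (μ := μ) (fun m ω => G (X m ω)) ?_ ?_ ?_
  · have hE : ∫ ω, G (X 0 ω) ∂μ = if α = γ then 1 + ((∑ j, α j : ℕ) : ℝ) * s / t else 0 := by
      rw [← hGint, ← hdist 0, integral_map (hmeas 0).aemeasurable hGm.aestronglyMeasurable]
    simp only [hE] at hlaw
    filter_upwards [hlaw] with ω hω
    simpa only [div_eq_inv_mul] using hω
  · have h := hGi
    rw [← hdist 0] at h
    exact h.comp_measurable (hmeas 0)
  · intro i j hij
    exact (hindep.indepFun hij).comp hGm hGm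
  · intro i
    have : IdentDistrib (X i) (X 0) μ μ :=
      ⟨(hmeas i).aemeasurable, (hmeas 0).aemeasurable, by rw [hdist, hdist]⟩
    exact this.comp hGm
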